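/- (Proposition 1) Fix vehicle length l > 0, uncertainty parameter σₒ > 0, positive constants T, L, τ, and a maximum allowable collision probability p̂ ∈ (0,1). For a speed v > 0 define the optimal constrained collision-inclusive capacity s*(v) as the maximum of s(v,η) over all headways η > 0 with p(v,η) ≤ p̂ (this maximum exists). Then s* is strictly increasing in v: for all 0 < v₁ < v₂, s*(v₁) < s*(v₂). -/

import Mathlib

open MeasureTheory Real Filter Set

/-- The standard Gaussian probability density function. -/
noncomputable def stdGaussianPDF (x : ℝ) : ℝ :=
  (Real.sqrt (2 * Real.pi))⁻¹ * Real.exp (-x ^ 2 / 2)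

/-- The standard Gaussian cumulative distribution function Φ. -/
noncomputable def stdGaussianCDF (x : ℝ) : ℝ :=
  ∫ t in Set.Iic x, stdGaussianPDF t

/-- The per-time-step collision probability p(v,η) = Φ((l − v·η)/(v·σₒ·√η)). -/
noncomputable def collisionProb (l σₒ v η : ℝ) : ℝ :=
  stdGaussianCDF ((l - v * η) / (v * σₒ * Real.sqrt η))

/-- The collision-inclusive capacity s(v,η) = 1/(η + (T·L)/(τ·v)·p(v,η)). -/
noncomputable def cic (l σₒ T L τ v η : ℝ) : ℝ :=
  1 / (η + (T * L) / (τ * v) * collisionProb l σₒ v η)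


lemma pdf_eq : stdGaussianPDF = ProbabilityTheory.gaussianPDFReal 0 1 := by
  funext x
  simp [stdGaussianPDF, ProbabilityTheory.gaussianPDFReal]

lemma pdf_int : Integrable stdGaussianPDF := by
  rw [pdf_eq]; exact ProbabilityTheory.integrable_gaussianPDFReal 0 1

lemma pdf_pos (x : ℝ) : 0 < stdGaussianPDF x := by
  unfold stdGaussianPDF; positivity

lemma Phi_eq (x : ℝ) : stdGaussianCDF x =
    ProbabilityTheory.cdf (ProbabilityTheory.gaussianReal 0 1) x := by
  rw [ProbabilityTheory.cdf_eq_real, Measure.real,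
    ProbabilityTheory.gaussianReal_apply_eq_integral 0 one_ne_zero, ENNReal.toReal_ofReal]
  · rw [stdGaussianCDF, pdf_eq]
  · exact integral_nonneg (fun x => ProbabilityTheory.gaussianPDFReal_nonneg 0 1 x)

lemma Phi_mono : Monotone stdGaussianCDF := fun x y h => by
  rw [Phi_eq, Phi_eq]; exact ProbabilityTheory.monotone_cdf _ h

lemma Phi_bot : Tendsto stdGaussianCDF atBot (nhds 0) := by
  rw [funext Phi_eq]; exact ProbabilityTheory.tendsto_cdf_atBot _

lemma Phi_top : Tendsto stdGaussianCDF atTop (nhds 1) := by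
  rw [funext Phi_eq]; exact ProbabilityTheory.tendsto_cdf_atTop _

lemma Phi_pos (x : ℝ) : 0 < stdGaussianCDF x := by
  unfold stdGaussianCDF
  rw [setIntegral_pos_iff_support_of_nonneg_ae
    (Eventually.of_forall fun x => (pdf_pos x).le) pdf_int.integrableOn]
  have : Function.support stdGaussianPDF = univ := by
    ext y; simp [(pdf_pos y).ne']
  simp [this]

lemma Phi_cont : Continuous stdGaussianCDF := by
  have : stdGaussianCDF = fun x => stdGaussianCDF 0 + ∫ t in (0:ℝ)..x, stdGaussianPDF t := by
    funext x
    rw [← intervalIntegral.integral_Iic_sub_Iic pdf_int.integrableOn pdf_int.integrableOn]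
    simp [stdGaussianCDF]
  rw [this]
  exact continuous_const.add
    (intervalIntegral.continuous_primitive (fun a b => pdf_int.intervalIntegrable) 0)

lemma arg_eq {l σ v η : ℝ} (hσ : 0 < σ) (hv : 0 < v) (hη : 0 < η) :
    (l - v * η) / (v * σ * √η) = l / (v * σ) * (√η)⁻¹ - √η / σ := by
  have h := Real.sqrt_pos.2 hη
  have h2 := Real.sq_sqrt hη.le
  field_simp
  rw [h2]

lemma cp_cont {l σ v : ℝ} (hσ : 0 < σ) (hv : 0 < v) :
    ContinuousOn (collisionProb l σ v) (Ioi 0) := by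
  unfold collisionProb
  refine Phi_cont.comp_continuousOn ?_
  refine ContinuousOn.div (by fun_prop) (by fun_prop) ?_
  intro η hη
  have h := Real.sqrt_pos.2 hη
  positivity

lemma cp_top {l σ v : ℝ} (hl : 0 < l) (hσ : 0 < σ) (hv : 0 < v) :
    Tendsto (collisionProb l σ v) atTop (nhds 0) := by
  unfold collisionProb
  refine Phi_bot.comp ?_
  have h1 : Tendsto (fun η : ℝ => l / (v * σ) * (√η)⁻¹) atTop (nhds (l / (v * σ) * 0)) :=
    (tendsto_inv_atTop_zero.comp Real.tendsto_sqrt_atTop).const_mul _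
  have h2 : Tendsto (fun η : ℝ => -(√η / σ)) atTop atBot :=
    tendsto_neg_atTop_atBot.comp (Real.tendsto_sqrt_atTop.atTop_div_const hσ)
  refine (h1.add_atBot h2).congr' ?_
  filter_upwards [eventually_gt_atTop 0] with η hη
  rw [arg_eq hσ hv hη]; ring

lemma cp_zero {l σ v : ℝ} (hl : 0 < l) (hσ : 0 < σ) (hv : 0 < v) :
    Tendsto (collisionProb l σ v) (nhdsWithin 0 (Ioi 0)) (nhds 1) := by
  unfold collisionProb
  refine Phi_top.comp ?_
  have h0 : Tendsto (fun η : ℝ => √η) (nhdsWithin 0 (Ioi 0)) (nhds 0) := by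
    have := (Real.continuous_sqrt.tendsto 0).mono_left (nhdsWithin_le_nhds (s := Ioi 0))
    simpa using this
  have h0' : Tendsto (fun η : ℝ => √η) (nhdsWithin 0 (Ioi 0)) (nhdsWithin 0 (Ioi 0)) := by
    refine tendsto_nhdsWithin_iff.2 ⟨h0, ?_⟩
    filter_upwards [self_mem_nhdsWithin] with η hη
    exact Real.sqrt_pos.2 hη
  have h1 : Tendsto (fun η : ℝ => l / (v * σ) * (√η)⁻¹) (nhdsWithin 0 (Ioi 0)) atTop :=
    (tendsto_inv_nhdsGT_zero.comp h0').const_mul_atTop (by positivity)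
  have h2 : Tendsto (fun η : ℝ => -(√η / σ)) (nhdsWithin 0 (Ioi 0)) (nhds (-(0 / σ))) :=
    (h0.div_const σ).neg
  refine (h1.atTop_add h2).congr' ?_
  filter_upwards [self_mem_nhdsWithin] with η hη
  rw [arg_eq hσ hv hη]; ring

lemma cp_anti {l σ v w η : ℝ} (hl : 0 < l) (hσ : 0 < σ) (hv : 0 < v) (hvw : v < w)
    (hη : 0 < η) : collisionProb l σ w η ≤ collisionProb l σ v η := by
  unfold collisionProb
  apply Phi_mono
  rw [arg_eq hσ hv hη, arg_eq hσ (hv.trans hvw) hη]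
  gcongr

lemma exists_max (l σₒ T L τ pmax : ℝ)
    (hl : 0 < l) (hσ : 0 < σₒ) (hT : 0 < T) (hL : 0 < L) (hτ : 0 < τ)
    (hpmax : pmax ∈ Set.Ioo (0 : ℝ) 1) (v : ℝ) (hv : 0 < v) :
    ∃ η > (0 : ℝ), collisionProb l σₒ v η ≤ pmax ∧
      IsGreatest {y : ℝ | ∃ η' > (0 : ℝ), collisionProb l σₒ v η' ≤ pmax ∧
        y = cic l σₒ T L τ v η'} (cic l σₒ T L τ v η) := by
  obtain ⟨η₀, hη₀, hp₀⟩ := ((eventually_gt_atTop (0:ℝ)).and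
    ((cp_top hl hσ hv).eventually_le_const hpmax.1)).exists
  obtain ⟨δ, hδ, hδp⟩ := mem_nhdsGT_iff_exists_Ioo_subset.1
    ((cp_zero hl hσ hv).eventually_const_lt hpmax.2)
  have hδ : (0:ℝ) < δ := hδ
  have low : ∀ η > 0, collisionProb l σₒ v η ≤ pmax → δ ≤ η := by
    intro η hη hp
    by_contra hc
    exact absurd (hδp ⟨hη, not_le.1 hc⟩) (not_lt.2 hp)
  have hc : 0 < (T * L) / (τ * v) := by positivity
  set D : ℝ → ℝ := fun η => η + (T * L) / (τ * v) * collisionProb l σₒ v η with hD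
  have cpp : ∀ η, 0 < collisionProb l σₒ v η := fun η => Phi_pos _
  have hDη : ∀ η, η < D η := fun η => by
    have := mul_pos hc (cpp η)
    simp only [hD]; linarith
  have hsub : Icc δ (D η₀) ⊆ Ioi 0 := fun x hx => lt_of_lt_of_le hδ hx.1
  have hcont := (cp_cont (l := l) hσ hv).mono hsub
  have hK : IsCompact (Icc δ (D η₀) ∩ collisionProb l σₒ v ⁻¹' Iic pmax) :=
    isCompact_Icc.of_isClosed_subset
      (hcont.preimage_isClosed_of_isClosed isClosed_Icc isClosed_Iic) inter_subset_left
  have hDc : ContinuousOn D (Icc δ (D η₀) ∩ collisionProb l σₒ v ⁻¹' Iic pmax) :=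
    continuousOn_id.add (continuousOn_const.mul (hcont.mono inter_subset_left))
  have h0K : η₀ ∈ Icc δ (D η₀) ∩ collisionProb l σₒ v ⁻¹' Iic pmax :=
    ⟨⟨low _ hη₀ hp₀, (hDη _).le⟩, hp₀⟩
  obtain ⟨η, hηK, hmin⟩ := hK.exists_isMinOn ⟨_, h0K⟩ hDc
  have hη : 0 < η := hsub hηK.1
  refine ⟨η, hη, hηK.2, ⟨η, hη, hηK.2, rfl⟩, ?_⟩
  rintro y ⟨η', hη', hp', rfl⟩
  have key : D η ≤ D η' := by
    by_cases h : η' ≤ D η₀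
    · exact hmin ⟨⟨low _ hη' hp', h⟩, hp'⟩
    · have h1 : D η ≤ D η₀ := hmin h0K
      have := hDη η'
      linarith
  exact one_div_le_one_div_of_le (hη.trans (hDη η)) key

/-- Proposition 1: for each speed v > 0, the maximum of s(v,η)
over headways η > 0 with p(v,η) ≤ pmax exists, and this optimal constrained
collision-inclusive capacity is strictly increasing in the speed v. -/
theorem optimal_constrained_cic_strictMono_speed (l σₒ T L τ pmax : ℝ)
    (hl : 0 < l) (hσ : 0 < σₒ) (hT : 0 < T) (hL : 0 < L) (hτ : 0 < τ)
    (hpmax : pmax ∈ Set.Ioo (0 : ℝ) 1) :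
    (∀ v > (0 : ℝ), ∃ η > (0 : ℝ), collisionProb l σₒ v η ≤ pmax ∧
      IsGreatest {y : ℝ | ∃ η' > (0 : ℝ), collisionProb l σₒ v η' ≤ pmax ∧
        y = cic l σₒ T L τ v η'} (cic l σₒ T L τ v η)) ∧
    (∀ v₁ v₂ : ℝ, 0 < v₁ → v₁ < v₂ →
      sSup {y : ℝ | ∃ η > (0 : ℝ), collisionProb l σₒ v₁ η ≤ pmax ∧
        y = cic l σₒ T L τ v₁ η} <
      sSup {y : ℝ | ∃ η > (0 : ℝ), collisionProb l σₒ v₂ η ≤ pmax ∧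
        y = cic l σₒ T L τ v₂ η}) := by
  refine ⟨fun v hv => exists_max l σₒ T L τ pmax hl hσ hT hL hτ hpmax v hv, ?_⟩
  intro v₁ v₂ hv₁ h12
  have hv₂ := hv₁.trans h12
  obtain ⟨η₁, hη₁, hp₁, hg₁⟩ := exists_max l σₒ T L τ pmax hl hσ hT hL hτ hpmax v₁ hv₁
  obtain ⟨η₂, hη₂, hp₂, hg₂⟩ := exists_max l σₒ T L τ pmax hl hσ hT hL hτ hpmax v₂ hv₂
  rw [hg₁.csSup_eq, hg₂.csSup_eq]
  have hanti := cp_anti hl hσ hv₁ h12 hη₁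
  refine lt_of_lt_of_le ?_ (hg₂.2 ⟨η₁, hη₁, hanti.trans hp₁, rfl⟩)
  have q1 : 0 < collisionProb l σₒ v₁ η₁ := Phi_pos _
  have q2 : 0 < collisionProb l σₒ v₂ η₁ := Phi_pos _
  unfold cic
  apply one_div_lt_one_div_of_lt
  · positivity
  · have hc : (T * L) / (τ * v₂) < (T * L) / (τ * v₁) := by gcongr
    have : (T * L) / (τ * v₂) * collisionProb l σₒ v₂ η₁
        < (T * L) / (τ * v₁) * collisionProb l σₒ v₁ η₁ :=
      mul_lt_mul hc hanti q2 (by positivity)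
    linarith
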